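/- For every integer d ≥ 1 there is a constant c(d) > 0 such that the following holds. Let P(x) = Σ_{i=0}^d c_i x^i be a real polynomial of degree at most d in one variable with max_{1 ≤ i ≤ d} |c_i| ≥ 1. Then for every closed interval [a,b] ⊆ [−1,1] with a < b, the oscillation of P on [a,b], namely sup_{x ∈ [a,b]} P(x) − inf_{x ∈ [a,b]} P(x), is at least c(d)·(b−a)^d. -/

import Mathlib

/-!
Subtracting from `P` its value at a point of `[a, b]` changes only the constant coefficient and
leaves a polynomial bounded on `[a, b]` by the oscillation of `P`. Lagrange interpolation at `d + 1`
equally spaced nodes recovers the coefficients of that polynomial from its values. Each basis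
polynomial is a product of `d` monic linear factors with bounded roots divided by `d` differences of
nodes, and each difference is at least `(b - a) / (d + 1)`; this is the source of the exponent `d`.
-/

open Polynomial Finset Lagrange Metric

section SeparatedNodes

variable {K ι : Type*} [NormedField K] {s : Finset ι} {v : ι → K} {B δ M : ℝ}

lemma norm_coeff_nodal_le (hv : ∀ j ∈ s, ‖v j‖ ≤ B) (i : ℕ) :
    ‖(nodal s v).coeff i‖ ≤ (1 + B) ^ #s := by
  obtain rfl | ⟨j, hj⟩ := s.eq_empty_or_nonempty
  · rw [nodal_empty, coeff_one]
    split_ifs <;> simp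
  have hB : 0 ≤ B := (norm_nonneg _).trans (hv j hj)
  have hroots : ∀ z ∈ (nodal s v).roots, ‖z‖ ≤ B := by
    intro z hz
    have hz0 : ∏ j ∈ s, (z - v j) = 0 := by rw [← eval_nodal]; exact isRoot_of_mem_roots hz
    obtain ⟨j, hj, hzj⟩ := prod_eq_zero_iff.1 hz0
    exact sub_eq_zero.1 hzj ▸ hv j hj
  have hsplits : (nodal s v).Splits := Splits.prod fun j _ => Splits.X_sub_C (v j)
  have hvieta : ‖(nodal s v).coeff i‖ ≤ B ^ (#s - i) * (#s).choose i := by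
    simpa only [Polynomial.map_id, natDegree_nodal] using
      coeff_le_of_roots_le (f := RingHom.id K) i nodal_monic (by rwa [Polynomial.map_id])
        (by rwa [Polynomial.map_id])
  refine hvieta.trans ?_
  obtain hi | hi := lt_or_ge #s i
  · rw [Nat.choose_eq_zero_of_lt hi, Nat.cast_zero, mul_zero]
    positivity
  calc B ^ (#s - i) * (#s).choose i
      = 1 ^ i * B ^ (#s - i) * (#s).choose i := by rw [one_pow, one_mul]
    _ ≤ ∑ m ∈ range (#s + 1), 1 ^ m * B ^ (#s - m) * (#s).choose m :=
        single_le_sum (f := fun m => 1 ^ m * B ^ (#s - m) * ((#s).choose m : ℝ))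
          (fun m _ => by positivity) (mem_range_succ_iff.2 hi)
    _ = (1 + B) ^ #s := (add_pow 1 B #s).symm

lemma norm_nodalWeight_le [DecidableEq ι] {k : ι} (hk : k ∈ s) (hδ : 0 < δ)
    (hsep : ∀ j ∈ s, k ≠ j → δ ≤ ‖v k - v j‖) :
    ‖nodalWeight s v k‖ ≤ δ⁻¹ ^ (#s - 1) := by
  rw [nodalWeight, norm_prod]
  calc ∏ j ∈ s.erase k, ‖(v k - v j)⁻¹‖
      ≤ ∏ _j ∈ s.erase k, δ⁻¹ := prod_le_prod (fun _ _ => norm_nonneg _) fun j hj => by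
        rw [norm_inv]
        exact inv_anti₀ hδ (hsep j (mem_of_mem_erase hj) (ne_of_mem_erase hj).symm)
    _ = δ⁻¹ ^ (#s - 1) := by rw [prod_const, card_erase_of_mem hk]

lemma norm_coeff_basis_le [DecidableEq ι] {k : ι} (hk : k ∈ s) (hv : ∀ j ∈ s, ‖v j‖ ≤ B)
    (hδ : 0 < δ) (hsep : ∀ j ∈ s, k ≠ j → δ ≤ ‖v k - v j‖) (i : ℕ) :
    ‖(Lagrange.basis s v k).coeff i‖ ≤ ((1 + B) / δ) ^ (#s - 1) := by
  have hnodal : ‖(nodal (s.erase k) v).coeff i‖ ≤ (1 + B) ^ (#s - 1) :=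
    card_erase_of_mem hk ▸ norm_coeff_nodal_le (fun j hj => hv j (mem_of_mem_erase hj)) i
  rw [basis_eq_prod_sub_inv_mul_nodal_div hk, ← nodal_erase_eq_nodal_div hk, coeff_C_mul, norm_mul,
    div_eq_inv_mul, mul_pow]
  gcongr
  exact norm_nodalWeight_le hk hδ hsep

lemma norm_coeff_le_of_norm_eval_le {P : K[X]} (hP : P.degree < #s) (hv : ∀ j ∈ s, ‖v j‖ ≤ B)
    (hδ : 0 < δ) (hsep : (s : Set ι).Pairwise fun k j => δ ≤ ‖v k - v j‖)
    (hM : ∀ k ∈ s, ‖P.eval (v k)‖ ≤ M) (i : ℕ) :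
    ‖P.coeff i‖ ≤ #s * (M * ((1 + B) / δ) ^ (#s - 1)) := by
  classical
  have hinj : Set.InjOn v s := fun k hk j hj hkj => by
    by_contra hne
    have hle : δ ≤ ‖v k - v j‖ := hsep hk hj hne
    rw [hkj, sub_self, norm_zero] at hle
    exact hle.not_gt hδ
  rw [eq_interpolate hinj hP, interpolate_apply, finsetSum_coeff, ← nsmul_eq_mul]
  refine norm_sum_le_of_le _ (fun k hk => ?_) |>.trans_eq (sum_const _)
  rw [coeff_C_mul, norm_mul]
  exact mul_le_mul (hM k hk) (norm_coeff_basis_le hk hv hδ (hsep hk) i) (norm_nonneg _)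
    ((norm_nonneg _).trans (hM k hk))

end SeparatedNodes

section EquispacedNodes

variable {a b : ℝ} {d : ℕ}

/-- The `k`-th of the equally spaced nodes used to interpolate polynomials of degree at most `d` on
`[a, b]`. The spacing is `(b - a) / (d + 1)` rather than `(b - a) / d`, so that it is positive for
`d = 0` too; the nodes `k ≤ d` therefore stop short of `b`. -/
noncomputable def equispacedNode (a b : ℝ) (d k : ℕ) : ℝ :=
  a + k * ((b - a) / (d + 1))

lemma equispacedNode_mem_Icc (hab : a ≤ b) {k : ℕ} (hk : k ≤ d + 1) :
    equispacedNode a b d k ∈ Set.Icc a b := by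
  have hstep : 0 ≤ (b - a) / (d + 1) := div_nonneg (sub_nonneg.2 hab) (by positivity)
  refine ⟨le_add_of_nonneg_right (mul_nonneg k.cast_nonneg hstep), ?_⟩
  calc a + k * ((b - a) / (d + 1))
      ≤ a + (d + 1) * ((b - a) / (d + 1)) := by gcongr; exact_mod_cast hk
    _ = b := by rw [mul_div_cancel₀ _ (by positivity), add_sub_cancel]

lemma le_abs_equispacedNode_sub (hab : a ≤ b) {k j : ℕ} (hkj : k ≠ j) :
    (b - a) / (d + 1) ≤ |equispacedNode a b d k - equispacedNode a b d j| := by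
  have hstep : 0 ≤ (b - a) / (d + 1) := div_nonneg (sub_nonneg.2 hab) (by positivity)
  have hone : (1 : ℝ) ≤ |(k : ℝ) - j| := by
    exact_mod_cast Int.one_le_abs (sub_ne_zero.2 (Nat.cast_injective.ne hkj : (k : ℤ) ≠ j))
  rw [equispacedNode, equispacedNode, add_sub_add_left_eq_sub, ← sub_mul, abs_mul,
    abs_of_nonneg hstep]
  exact le_mul_of_one_le_left hstep hone

end EquispacedNodes

section Interval

variable {K : Type*} [RCLike K] {P : K[X]} {d : ℕ} {a b R M : ℝ}

lemma norm_coeff_le_of_norm_eval_le_on_Icc (hP : P.natDegree ≤ d) (ha : -R ≤ a) (hab : a < b)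
    (hb : b ≤ R) (hM : ∀ x ∈ Set.Icc a b, ‖P.eval (x : K)‖ ≤ M) (i : ℕ) :
    ‖P.coeff i‖ ≤ (d + 1) * (M * ((1 + R) / ((b - a) / (d + 1))) ^ d) := by
  have hmem : ∀ k ∈ range (d + 1), equispacedNode a b d k ∈ Set.Icc a b := fun k hk =>
    equispacedNode_mem_Icc hab.le (mem_range.1 hk).le
  have hnorm : ∀ k ∈ range (d + 1), ‖(equispacedNode a b d k : K)‖ ≤ R := fun k hk => by
    rw [RCLike.norm_ofReal, abs_le]
    exact ⟨ha.trans (hmem k hk).1, (hmem k hk).2.trans hb⟩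
  have hsep : (range (d + 1) : Set ℕ).Pairwise fun k j =>
      (b - a) / (d + 1) ≤ ‖(equispacedNode a b d k : K) - equispacedNode a b d j‖ :=
    fun k _ j _ hkj => by
      simpa only [← RCLike.ofReal_sub, RCLike.norm_ofReal] using
        le_abs_equispacedNode_sub hab.le hkj
  have hdeg : P.degree < #(range (d + 1)) := by
    rw [card_range]
    exact degree_le_natDegree.trans_lt (by exact_mod_cast Nat.lt_succ_of_le hP)
  have hstep : 0 < (b - a) / (d + 1) := div_pos (sub_pos.2 hab) (by positivity)
  simpa only [card_range, Nat.cast_add_one, add_tsub_cancel_right] using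
    norm_coeff_le_of_norm_eval_le hdeg hnorm hstep hsep (fun k hk => hM _ (hmem k hk)) i

lemma isBounded_eval_image_Icc (P : K[X]) (a b : ℝ) :
    Bornology.IsBounded ((fun x : ℝ => P.eval (x : K)) '' Set.Icc a b) :=
  (isCompact_Icc.image (P.continuous.comp RCLike.continuous_ofReal)).isBounded

lemma norm_coeff_le_diam_eval_image_Icc (hP : P.natDegree ≤ d) (ha : -R ≤ a) (hab : a < b)
    (hb : b ≤ R) {i : ℕ} (hi : i ≠ 0) :
    ‖P.coeff i‖ ≤ (d + 1) * (diam ((fun x : ℝ => P.eval (x : K)) '' Set.Icc a b) *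
      ((1 + R) / ((b - a) / (d + 1))) ^ d) := by
  have hdiam : ∀ x ∈ Set.Icc a b, ‖(P - C (P.eval (a : K))).eval (x : K)‖ ≤
      diam ((fun x : ℝ => P.eval (x : K)) '' Set.Icc a b) := fun x hx => by
    rw [eval_sub, eval_C, ← dist_eq_norm]
    exact dist_le_diam_of_mem (isBounded_eval_image_Icc P a b) (Set.mem_image_of_mem _ hx)
      (Set.mem_image_of_mem _ (Set.left_mem_Icc.2 hab.le))
  simpa only [coeff_sub, coeff_C_of_ne_zero hi, sub_zero] using
    norm_coeff_le_of_norm_eval_le_on_Icc (by rwa [natDegree_sub_C]) ha hab hb hdiam i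

end Interval

theorem stmt3_general (K : Type*) [RCLike K] (d : ℕ) (R : ℝ) :
    ∃ c : ℝ, 0 < c ∧ ∀ P : K[X], P.natDegree ≤ d → ∀ i ≠ 0,
      ∀ a b : ℝ, -R ≤ a → a < b → b ≤ R →
        c * ‖P.coeff i‖ * (b - a) ^ d ≤
          diam ((fun x : ℝ => P.eval (x : K)) '' Set.Icc a b) := by
  refine ⟨((d + 1) * ((1 + |R|) * (d + 1)) ^ d)⁻¹, by positivity, ?_⟩
  intro P hP i hi a b ha hab hb
  have hpow : 0 < (b - a) ^ d := pow_pos (sub_pos.2 hab) d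
  have hcoeff := norm_coeff_le_diam_eval_image_Icc hP ((neg_le_neg (le_abs_self R)).trans ha) hab
    (hb.trans (le_abs_self R)) hi
  rw [div_div_eq_mul_div, div_pow, ← mul_div_assoc, ← mul_div_assoc, le_div_iff₀ hpow] at hcoeff
  rw [mul_assoc, inv_mul_le_iff₀ (by positivity)]
  linarith

/-- For every `d ≥ 1` there is `c(d) > 0` such that: if `P` is a real
polynomial of degree at most `d` with `max_{1 ≤ i ≤ d} |c_i| ≥ 1`, then for every
interval `[a,b] ⊆ [-1,1]` with `a < b`, the oscillation of `P` on `[a,b]` is at least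
`c(d) (b-a)^d`. -/
theorem stmt3 (d : ℕ) (hd : 1 ≤ d) :
    ∃ c : ℝ, 0 < c ∧ ∀ P : Polynomial ℝ, P.natDegree ≤ d →
      (∃ i, 1 ≤ i ∧ i ≤ d ∧ 1 ≤ |P.coeff i|) →
      ∀ a b : ℝ, -1 ≤ a → a < b → b ≤ 1 →
        c * (b - a) ^ d ≤
          sSup (P.eval '' Set.Icc a b) - sInf (P.eval '' Set.Icc a b) := by
  obtain ⟨c, hc, hosc⟩ := stmt3_general ℝ d 1
  refine ⟨c, hc, fun P hP ⟨i, hi, _, hPi⟩ a b ha hab hb => ?_⟩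
  have hscale : c * (b - a) ^ d ≤ c * ‖P.coeff i‖ * (b - a) ^ d :=
    mul_le_mul_of_nonneg_right (le_mul_of_one_le_right hc.le hPi) (pow_nonneg (sub_pos.2 hab).le d)
  exact hscale.trans ((hosc P hP i (Nat.one_le_iff_ne_zero.1 hi) a b ha hab hb).trans_eq
    (Real.diam_eq (isBounded_eval_image_Icc P a b)))
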